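/- arXiv:2204.03707 — 3 statements merged into one kernel-verified Lean document; each statement's English description precedes it below -/
import Mathlib

section
/- For every feasible solution (z, y, x, x̄, P) of the formulation (HLPLF-1BP) there exists a feasible solution (z, y, x', x̄', P') with the same design variables z and y, whose objective value is less than or equal to that of (z, y, x, x̄, P), and which satisfies x'^r_{lk} = x̄'^r_{lk} = P'^r_{lk} = 0 for every commodity r ∈ R and every arc (l,k) ∈ A such that C^r_{kl} < C^r_{lk}. In particular, if the feasible region is nonempty and an optimal solution exists, there is an optimal solution with this property. -/
open Finset

instance sym2Nonempty {V : Type*} [Nonempty V] : Nonempty (Sym2 V) :=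
  ⟨s(Classical.arbitrary V, Classical.arbitrary V)⟩

/-- Feasibility of a solution `(z, y, x, xb, P)` for the formulation (HLPLF-1BP). -/
def FeasibleHLPLF1BP {V R : Type*} [Fintype V] [DecidableEq V] [Nonempty V] [Fintype R]
    (p : Sym2 V → ℝ)
    (z : V → ℝ) (y : Sym2 V → ℝ)
    (x xb : R → V × V → ℝ) (P : R → V × V → ℝ) : Prop :=
  -- binary variables
  (∀ k : V, z k = 0 ∨ z k = 1) ∧
  (∀ e : Sym2 V, y e = 0 ∨ y e = 1) ∧
  (∀ (r : R) (a : V × V), x r a = 0 ∨ x r a = 1) ∧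
  (∀ (r : R) (a : V × V), xb r a = 0 ∨ xb r a = 1) ∧
  -- exactly one inter-hub arc in the original and the backup path
  (∀ r : R, ∑ a : V × V, x r a = 1) ∧
  (∀ r : R, ∑ a : V × V, xb r a = 1) ∧
  -- original and backup path use different, activated, inter-hub edges
  (∀ (r : R) (k l : V), k ≠ l →
      x r (k, l) + x r (l, k) + xb r (k, l) + xb r (l, k) ≤ y s(k, l)) ∧
  (∀ (r : R) (k : V), x r (k, k) + xb r (k, k) ≤ y s(k, k)) ∧
  -- endpoints of activated edges are activated hubs
  (∀ k l : V, y s(k, l) ≤ z k ∧ y s(k, l) ≤ z l) ∧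
  -- valid inequalities linking routing and hub activation variables
  (∀ (r : R) (k : V),
      x r (k, k) + ∑ l ∈ univ.filter (· ≠ k), (x r (k, l) + x r (l, k)) ≤ z k) ∧
  (∀ (r : R) (k : V),
      xb r (k, k) + ∑ l ∈ univ.filter (· ≠ k), (xb r (k, l) + xb r (l, k)) ≤ z k) ∧
  -- linearization constraints for the P variables
  (∀ (r : R) (a : V × V),
      (∑ a' : V × V, p s(a'.1, a'.2) * x r a') + (xb r a - 1) ≤ P r a) ∧
  (∀ (r : R) (a : V × V), 0 ≤ P r a) ∧
  -- valid inequality bounding the P variables by the maximum failure probability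
  (∀ r : R, ∑ a : V × V, P r a ≤ Finset.univ.sup' Finset.univ_nonempty p)

/-- Objective value of a solution of (HLPLF-1BP). -/
def objHLPLF1BP {V R : Type*} [Fintype V] [DecidableEq V] [Fintype R]
    (f : V → ℝ) (h : Sym2 V → ℝ) (C : R → V × V → ℝ) (p : Sym2 V → ℝ)
    (z : V → ℝ) (y : Sym2 V → ℝ)
    (x : R → V × V → ℝ) (P : R → V × V → ℝ) : ℝ :=
  ∑ k : V, f k * z k + ∑ e : Sym2 V, h e * y e +
    ∑ r : R, ∑ a : V × V, C r a * ((1 - p s(a.1, a.2)) * x r a + P r a)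

/-- Move all weight of each arc onto its strictly cheaper orientation. -/
noncomputable def foldArc {V : Type*} (c g : V × V → ℝ) (a : V × V) : ℝ :=
  if c a.swap < c a then 0 else if c a < c a.swap then g a + g a.swap else g a

theorem foldArc_pair {V : Type*} (c g : V × V → ℝ) (a : V × V) :
    foldArc c g a + foldArc c g a.swap = g a + g a.swap := by
  unfold foldArc
  simp only [Prod.swap_swap]
  split_ifs <;> linarith

theorem sum_swap_arc {V : Type*} [Fintype V] (u : V × V → ℝ) :
    ∑ a : V × V, u a.swap = ∑ a : V × V, u a :=
  Equiv.sum_comp (Equiv.prodComm V V) u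

theorem sum_le_of_pair {V : Type*} [Fintype V] (u v : V × V → ℝ)
    (huv : ∀ a, u a + u a.swap ≤ v a + v a.swap) :
    ∑ a : V × V, u a ≤ ∑ a : V × V, v a := by
  have h1 := Finset.sum_le_sum (fun a (_ : a ∈ (univ : Finset (V × V))) => huv a)
  rw [Finset.sum_add_distrib, Finset.sum_add_distrib, sum_swap_arc, sum_swap_arc] at h1
  linarith

theorem sum_eq_of_pair {V : Type*} [Fintype V] (u v : V × V → ℝ)
    (huv : ∀ a, u a + u a.swap = v a + v a.swap) :
    ∑ a : V × V, u a = ∑ a : V × V, v a :=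
  le_antisymm (sum_le_of_pair u v fun a => (huv a).le) (sum_le_of_pair v u fun a => (huv a).ge)

theorem foldArc_diag {V : Type*} (c g : V × V → ℝ) (k : V) :
    foldArc c g (k, k) = g (k, k) := by
  simp [foldArc]

theorem foldArc_bin {V : Type*} (c g : V × V → ℝ)
    (hg : ∀ a, g a = 0 ∨ g a = 1) (hs : ∀ a, a ≠ a.swap → g a + g a.swap ≤ 1) (a : V × V) :
    foldArc c g a = 0 ∨ foldArc c g a = 1 := by
  unfold foldArc
  split_ifs with h1 h2
  · exact Or.inl rfl
  · have hne : a ≠ a.swap := fun hEq => by rw [← hEq] at h2; exact lt_irrefl _ h2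
    have h3 := hs a hne
    rcases hg a with h4 | h4
    · rw [h4, zero_add]
      exact hg a.swap
    · rcases hg a.swap with h5 | h5
      · right
        rw [h4, h5, add_zero]
      · rw [h4, h5] at h3
        norm_num at h3
  · exact hg a

/-- For every feasible solution of (HLPLF-1BP) there is a feasible solution with the same
design variables, no larger objective value, and with `x`, `xb` and `P` vanishing on every
arc `(l,k)` whose reversed arc is strictly cheaper (`C r (k,l) < C r (l,k)`).  In
particular an optimal solution with this property exists whenever an optimal solution
exists. -/
theorem hlplf1bp_halve_variables
    {V R : Type*} [Fintype V] [DecidableEq V] [Nonempty V] [Fintype R]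
    (f : V → ℝ) (h : Sym2 V → ℝ) (C : R → V × V → ℝ) (p : Sym2 V → ℝ)
    (hf : ∀ k : V, 0 ≤ f k) (hh : ∀ e : Sym2 V, 0 ≤ h e)
    (hC : ∀ (r : R) (a : V × V), 0 ≤ C r a)
    (hp0 : ∀ e : Sym2 V, 0 ≤ p e) (hp1 : ∀ e : Sym2 V, p e ≤ 1)
    (z : V → ℝ) (y : Sym2 V → ℝ)
    (x xb : R → V × V → ℝ) (P : R → V × V → ℝ)
    (hfeas : FeasibleHLPLF1BP p z y x xb P) :
    ∃ (x' xb' : R → V × V → ℝ) (P' : R → V × V → ℝ),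
      FeasibleHLPLF1BP p z y x' xb' P' ∧
      objHLPLF1BP f h C p z y x' P' ≤ objHLPLF1BP f h C p z y x P ∧
      ∀ (r : R) (k l : V), C r (k, l) < C r (l, k) →
        x' r (l, k) = 0 ∧ xb' r (l, k) = 0 ∧ P' r (l, k) = 0 := by
  obtain ⟨hz, hy, hx, hxb, sx, sxb, hkl, hkk, hyz, hzx, hzxb, hlin, hP, hPs⟩ := hfeas
  have nx : ∀ r a, 0 ≤ x r a := fun r a => by rcases hx r a with h1 | h1 <;> rw [h1] <;> norm_num
  have nxb : ∀ r a, 0 ≤ xb r a := fun r a => by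
    rcases hxb r a with h1 | h1 <;> rw [h1] <;> norm_num
  have y1 : ∀ e, y e ≤ 1 := fun e => by rcases hy e with h1 | h1 <;> rw [h1] <;> norm_num
  have hs4 : ∀ r (a : V × V), a ≠ a.swap →
      x r a + x r a.swap + xb r a + xb r a.swap ≤ 1 := by
    rintro r ⟨k, l⟩ hne
    have hkl' : k ≠ l := fun hEq => hne (by simp [hEq])
    exact (hkl r k l hkl').trans (y1 _)
  have psym : ∀ a : V × V, p s(a.swap.1, a.swap.2) = p s(a.1, a.2) := fun a => by
    rw [Prod.fst_swap, Prod.snd_swap, Sym2.eq_swap]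
  have pair : ∀ (r : R) (g : V × V → ℝ) (k l : V),
      foldArc (C r) g (k, l) + foldArc (C r) g (l, k) = g (k, l) + g (l, k) :=
    fun r g k l => foldArc_pair (C r) g (k, l)
  have hq : ∀ r, ∑ a' : V × V, p s(a'.1, a'.2) * foldArc (C r) (x r) a' =
      ∑ a' : V × V, p s(a'.1, a'.2) * x r a' := fun r => by
    apply sum_eq_of_pair
    intro a
    rw [psym, ← mul_add, ← mul_add, foldArc_pair]
  have hq1 : ∀ r, ∑ a' : V × V, p s(a'.1, a'.2) * x r a' ≤ 1 := fun r => by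
    rw [← sx r]
    exact Finset.sum_le_sum fun a _ => mul_le_of_le_one_left (nx r a) (hp1 _)
  refine ⟨fun r => foldArc (C r) (x r), fun r => foldArc (C r) (xb r),
    fun r => foldArc (C r) (P r),
    ⟨hz, hy, ?_, ?_, ?_, ?_, ?_, ?_, hyz, ?_, ?_, ?_, ?_, ?_⟩, ?_, ?_⟩
  · exact fun r => foldArc_bin _ _ (hx r) fun a ha => by
      linarith [hs4 r a ha, nxb r a, nxb r a.swap]
  · exact fun r => foldArc_bin _ _ (hxb r) fun a ha => by
      linarith [hs4 r a ha, nx r a, nx r a.swap]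
  · exact fun r => (sum_eq_of_pair _ _ (foldArc_pair (C r) (x r))).trans (sx r)
  · exact fun r => (sum_eq_of_pair _ _ (foldArc_pair (C r) (xb r))).trans (sxb r)
  · intro r k l hne
    linarith [hkl r k l hne, pair r (x r) k l, pair r (xb r) k l]
  · intro r k
    simpa only [foldArc_diag] using hkk r k
  · intro r k
    simpa only [foldArc_diag, pair] using hzx r k
  · intro r k
    simpa only [foldArc_diag, pair] using hzxb r k
  · intro r a
    simp only [hq]
    have h1 := hq1 r
    have h2 := hlin r a
    have h3 := hlin r a.swap
    have h4 := hP r a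
    have h5 := hP r a.swap
    unfold foldArc
    split_ifs with c1 c2
    · linarith
    · rcases hxb r a with h6 | h6
      · linarith
      · have hne : a ≠ a.swap := fun hEq => by rw [← hEq] at c2; exact lt_irrefl _ c2
        linarith [hs4 r a hne, nx r a, nx r a.swap, nxb r a.swap]
    · exact h2
  · intro r a
    have h4 := hP r a
    have h5 := hP r a.swap
    simp only [foldArc]
    split_ifs <;> linarith
  · exact fun r => (sum_eq_of_pair _ _ (foldArc_pair (C r) (P r))).le.trans (hPs r)
  · unfold objHLPLF1BP
    gcongr ?_ + ?_
    · exact le_rfl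
    refine Finset.sum_le_sum fun r _ => sum_le_of_pair _ _ fun a => ?_
    simp only [psym]
    have hw : ∀ a : V × V, 0 ≤ (1 - p s(a.1, a.2)) * x r a + P r a := fun a =>
      add_nonneg (mul_nonneg (by linarith [hp1 s(a.1, a.2)]) (nx r a)) (hP r a)
    have w1 := hw a
    have w2 := hw a.swap
    rw [psym] at w2
    simp only [foldArc, Prod.swap_swap]
    split_ifs with c1 c2 c2
    · linarith
    · nlinarith [mul_le_mul_of_nonneg_right c1.le w1]
    · nlinarith [mul_le_mul_of_nonneg_right c2.le w2]
    · exact le_rfl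
  · intro r k l hlt
    simp [foldArc, hlt]
end

section
/- Let λ ≥ 2 be an integer and let z : V → {0,1}, y : E → {0,1} satisfy y_{kl} ≤ z_k and y_{kl} ≤ z_l for every edge {k,l} ∈ E, and y(δ({k})) + y_{kk} ≥ λ z_k for every k ∈ V. If z_{k₀} = 1 for some k₀ ∈ V, then ∑_{k∈V} z_k ≥ λ; that is, any solution satisfying the λ-connectivity constraints with at least one activated hub has at least λ activated hub nodes. -/
open Finset

/-- The cut-set `δ(S)`: the set of (non-loop) edges with one endpoint in `S` and the other
outside `S`. -/
def cutset {V : Type*} [Fintype V] [DecidableEq V] (S : Finset V) : Finset (Sym2 V) :=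
  Finset.univ.filter (fun e : Sym2 V => ∃ k l : V, k ∈ S ∧ l ∉ S ∧ e = s(k, l))

/-- `y(δ(S))`: the number of activated hub edges in the cut-set of `S` (relative to the
indicator vector `y`). -/
def cutVal {V : Type*} [Fintype V] [DecidableEq V] (y : Sym2 V → ℝ) (S : Finset V) : ℝ :=
  ∑ e ∈ cutset S, y e

/-- Any solution satisfying the λ-connectivity (singleton cut-set) constraints that has
at least one activated hub must have at least `λ` activated hub nodes. -/
theorem lambda_connectivity_forces_lambda_hubs
    {V : Type*} [Fintype V] [DecidableEq V]
    (lam : ℤ) (hlam : 2 ≤ lam)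
    (z : V → ℝ) (y : Sym2 V → ℝ)
    (hz : ∀ k : V, z k = 0 ∨ z k = 1)
    (hy : ∀ e : Sym2 V, y e = 0 ∨ y e = 1)
    (hyz : ∀ k l : V, y s(k, l) ≤ z k ∧ y s(k, l) ≤ z l)
    (hsingle : ∀ k : V, (lam : ℝ) * z k ≤ cutVal y {k} + y s(k, k))
    (k₀ : V) (hk₀ : z k₀ = 1) :
    (lam : ℝ) ≤ ∑ k : V, z k := by
  have hcut : cutset ({k₀} : Finset V) = (Finset.univ.erase k₀).image (fun l => s(k₀, l)) := by
    ext e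
    simp only [cutset, Finset.mem_filter, Finset.mem_univ, true_and, Finset.mem_singleton,
      Finset.mem_image, Finset.mem_erase, and_true]
    constructor
    · rintro ⟨k, l, rfl, hl, rfl⟩
      exact ⟨l, hl, rfl⟩
    · rintro ⟨l, hl, rfl⟩
      exact ⟨k₀, l, rfl, hl, rfl⟩
  have hval : cutVal y {k₀} = ∑ l ∈ Finset.univ.erase k₀, y s(k₀, l) := by
    unfold cutVal
    rw [hcut, Finset.sum_image]
    intro a _ b _ hab
    exact Sym2.congr_right.mp hab
  have h := hsingle k₀
  rw [hk₀, mul_one, hval, Finset.sum_erase_add _ _ (Finset.mem_univ k₀)] at h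
  exact h.trans (Finset.sum_le_sum fun l _ => (hyz k₀ l).2)
end

section
/- Let ρ ∈ [0,1], let C : A → ℝ, and let x, x̄ : A → {0,1} satisfy ∑_{a∈A} x_a = 1, x_{kl} + x_{lk} + x̄_{kl} + x̄_{lk} ≤ 1 for every pair k ≠ l, and x_{kk} + x̄_{kk} ≤ 1 for every k ∈ V. Then ∑_{(k,l)∈A} C_{kl} [(1 − ρ) x_{kl} + x̄_{kl} ∑_{(k',l') ∈ A \ {(k,l),(l,k)}} ρ x_{k'l'}] = ∑_{(k,l)∈A} C_{kl} ((1 − ρ) x_{kl} + ρ x̄_{kl}). That is, when all edges have the same failure probability ρ, the expected routing cost of a commodity simplifies to ∑_{(k,l)∈A} C_{kl}((1 − ρ) x_{kl} + ρ x̄_{kl}). -/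
open Finset

/-- When all edges have the same failure probability `ρ`, the expected routing cost of a
commodity in (HLPLF-1BP) simplifies to `∑_{(k,l)∈A} C_{kl} ((1 − ρ) x_{kl} + ρ x̄_{kl})`. -/
theorem same_probability_simplification
    {V : Type*} [Fintype V] [DecidableEq V]
    (ρ : ℝ) (hρ0 : 0 ≤ ρ) (hρ1 : ρ ≤ 1)
    (C : V × V → ℝ) (x xb : V × V → ℝ)
    (hx : ∀ a : V × V, x a = 0 ∨ x a = 1)
    (hxb : ∀ a : V × V, xb a = 0 ∨ xb a = 1)
    (hsum : ∑ a : V × V, x a = 1)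
    (hedge : ∀ k l : V, k ≠ l → x (k, l) + x (l, k) + xb (k, l) + xb (l, k) ≤ 1)
    (hloop : ∀ k : V, x (k, k) + xb (k, k) ≤ 1) :
    ∑ a : V × V,
        C a * ((1 - ρ) * x a +
          xb a * ∑ a' ∈ Finset.univ \ ({a, (a.2, a.1)} : Finset (V × V)), ρ * x a')
      = ∑ a : V × V, C a * ((1 - ρ) * x a + ρ * xb a) := by
  have hnn : ∀ a, 0 ≤ x a := fun a => by rcases hx a with h | h <;> rw [h] <;> norm_num
  have hnb : ∀ a, 0 ≤ xb a := fun a => by rcases hxb a with h | h <;> rw [h] <;> norm_num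
  refine Finset.sum_congr rfl ?_
  rintro ⟨k, l⟩ -
  rcases hxb (k, l) with h0 | h1
  · simp [h0]
  · have hz : x (k, l) = 0 ∧ x (l, k) = 0 := by
      by_cases hkl : k = l
      · subst hkl
        have h2 := hloop k
        have h3 := hnn (k, k)
        constructor <;> linarith
      · have h2 := hedge k l hkl
        have h3 := hnn (k, l)
        have h4 := hnn (l, k)
        have h5 := hnb (l, k)
        constructor <;> linarith
    have hs : ∑ a' ∈ Finset.univ \ ({(k, l), (l, k)} : Finset (V × V)), x a' = 1 := by
      rw [← hsum]
      refine Finset.sum_subset (Finset.subset_univ _) ?_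
      intro a _ ha
      have ha' : a = (k, l) ∨ a = (l, k) := by
        by_contra hc
        exact ha (by simpa using hc)
      rcases ha' with rfl | rfl
      · exact hz.1
      · exact hz.2
    rw [← Finset.mul_sum]
    simp only [hs, h1]
    ring
end
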